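/- Let M ≥ 1 and X ≥ 1 be integers, let N = M + 2X, and let α_i = ω_N^i for i ∈ {1, …, N}. Let A'_j ∈ ℂ^{t×p} and B'_j ∈ ℂ^{p×r} for j ∈ {1, …, M}, and let R'_j ∈ ℂ^{t×p} and S'_j ∈ ℂ^{p×r} for j ∈ {1, …, X} be arbitrary matrices. Define f(z) = Σ_{j=1}^{M} A'_j z^{j−1} + Σ_{j=1}^{X} R'_j z^{M+j−1} and g(z) = Σ_{j=1}^{M} B'_j z^{−(j−1)} + Σ_{j=1}^{X} S'_j z^{j} for z ∈ ℂ \ {0}. Then (1/N) Σ_{i=1}^{N} Re(f(α_i) g(α_i)) = Re(Σ_{j=1}^{M} A'_j B'_j), where Re is applied entrywise. -/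

import Mathlib

/-!
The product `f(z) g(z)` is a Laurent polynomial in `z` with matrix coefficients, and summing a
Laurent polynomial over all `N`-th roots of unity leaves `N` times the coefficients whose exponent
is divisible by `N`. The exponents of `f(z) g(z)` lie between `-(M - 1)` and `M + 2X - 1`, so when
`M + 2X ≤ N` the only multiple of `N` among them is `0`, and it arises only from the products
`A'_j z^(j-1) · B'_j z^(-(j-1))`.
-/

section LaurentEval

open Finset

variable {K ι κ V m n o : Type*} [Field K] [Fintype ι] [Fintype κ] [AddCommMonoid V] [Module K V]

/-- The value at `z` of the Laurent polynomial `∑ k, C k z ^ e k` with coefficients in a module.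
The exponents `e k` need not be distinct, so that products are again of this form. -/
def laurentEval (e : ι → ℤ) (C : ι → V) (z : K) : V :=
  ∑ k, z ^ e k • C k

theorem laurentEval_sumElim (a : ι → ℤ) (b : κ → ℤ) (F : ι → V) (G : κ → V) (z : K) :
    laurentEval (Sum.elim a b) (Sum.elim F G) z = laurentEval a F z + laurentEval b G z :=
  Fintype.sum_sum_type _

theorem laurentEval_mul_laurentEval [Fintype n] (a : ι → ℤ) (b : κ → ℤ) (F : ι → Matrix m n K)
    (G : κ → Matrix n o K) {z : K} (hz : z ≠ 0) :
    laurentEval a F z * laurentEval b G z =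
      laurentEval (fun k : ι × κ => a k.1 + b k.2) (fun k => F k.1 * G k.2) z := by
  calc (∑ s, z ^ a s • F s) * ∑ u, z ^ b u • G u
      = ∑ s, ∑ u, (z ^ a s • F s) * (z ^ b u • G u) := by
        rw [Matrix.sum_mul]
        exact sum_congr rfl fun s _ => Matrix.mul_sum _ _ _
    _ = ∑ s, ∑ u, z ^ (a s + b u) • (F s * G u) := by
        simp only [Matrix.smul_mul, Matrix.mul_smul, smul_smul, zpow_add₀ hz, mul_comm]
    _ = ∑ k : ι × κ, z ^ (a k.1 + b k.2) • (F k.1 * G k.2) := by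
        rw [Fintype.sum_prod_type]

theorem sum_zpow_of_isPrimitiveRoot {ζ : K} {N : ℕ} (hζ : IsPrimitiveRoot ζ N) (e : ℤ) :
    ∑ i : Fin N, (ζ ^ ((i : ℕ) + 1)) ^ e = if (N : ℤ) ∣ e then (N : K) else 0 := by
  have pow_zpow_comm (n : ℕ) (d : ℤ) : (ζ ^ n) ^ d = (ζ ^ d) ^ n := by
    simpa only [zpow_natCast] using zpow_comm ζ n d
  simp only [pow_zpow_comm]
  split_ifs with hdvd
  · simp [(hζ.zpow_eq_one_iff_dvd e).2 hdvd]
  · have hne : ζ ^ e ≠ 1 := mt (hζ.zpow_eq_one_iff_dvd e).1 hdvd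
    have hpow : (ζ ^ e) ^ N = 1 := by rw [← pow_zpow_comm, hζ.pow_eq_one, one_zpow]
    simp only [pow_succ', ← mul_sum]
    rw [Fin.sum_univ_eq_sum_range (fun i => (ζ ^ e) ^ i), geom_sum_eq hne, hpow, sub_self,
      zero_div, mul_zero]

theorem sum_laurentEval_of_isPrimitiveRoot {ζ : K} {N : ℕ} (hζ : IsPrimitiveRoot ζ N) (e : ι → ℤ)
    (C : ι → V) :
    ∑ i : Fin N, laurentEval e C (ζ ^ ((i : ℕ) + 1)) = N • ∑ k with (N : ℤ) ∣ e k, C k := by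
  simp only [laurentEval]
  rw [sum_comm]
  simp only [← sum_smul, sum_zpow_of_isPrimitiveRoot hζ, ite_smul, zero_smul,
    Nat.cast_smul_eq_nsmul, sum_filter, smul_sum, smul_ite, smul_zero]

end LaurentEval

section Scheme

open Finset

variable {M X N : ℕ} {K V : Type*} [Field K] [AddCommMonoid V]

/-- The exponents of `z` in the encoding polynomial `f`: the data blocks `A'_j` are indexed by
`Fin M` and the masks `R'_j` by `Fin X`, both counted from `0`. -/
def leftExponent (M X : ℕ) : Fin M ⊕ Fin X → ℤ :=
  Sum.elim (fun j => (j : ℕ)) (fun j => (M + j : ℕ))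

/-- The exponents of `z` in the encoding polynomial `g`: the data blocks `B'_j` are indexed by
`Fin M` and the masks `S'_j` by `Fin X`, both counted from `0`. -/
def rightExponent (M X : ℕ) : Fin M ⊕ Fin X → ℤ :=
  Sum.elim (fun j => -((j : ℕ) : ℤ)) (fun j => (j + 1 : ℕ))

theorem laurentEval_leftExponent [Module K V] (A : Fin M → V) (R : Fin X → V) (z : K) :
    laurentEval (leftExponent M X) (Sum.elim A R) z =
      ∑ j : Fin M, z ^ (j : ℕ) • A j + ∑ j : Fin X, z ^ (M + (j : ℕ)) • R j := by
  rw [leftExponent, laurentEval_sumElim]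
  simp only [laurentEval, zpow_natCast]

theorem laurentEval_rightExponent [Module K V] (B : Fin M → V) (S : Fin X → V) (z : K) :
    laurentEval (rightExponent M X) (Sum.elim B S) z =
      ∑ j : Fin M, z ^ (-((j : ℕ) : ℤ)) • B j + ∑ j : Fin X, z ^ ((j : ℕ) + 1) • S j := by
  rw [rightExponent, laurentEval_sumElim]
  simp only [laurentEval, zpow_natCast]

theorem dvd_leftExponent_add_rightExponent_iff (hN : M + 2 * X ≤ N) (s u : Fin M ⊕ Fin X) :
    (N : ℤ) ∣ leftExponent M X s + rightExponent M X u ↔ ∃ j, s = .inl j ∧ u = .inl j := by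
  constructor
  · intro hdvd
    have hlt : |leftExponent M X s + rightExponent M X u| < N := by
      rcases s with i | i <;> rcases u with j | j <;>
        simp only [leftExponent, rightExponent, Sum.elim_inl, Sum.elim_inr, abs_lt] <;> omega
    have hzero := Int.eq_zero_of_abs_lt_dvd hdvd hlt
    rcases s with i | i <;> rcases u with j | j <;>
      simp only [leftExponent, rightExponent, Sum.elim_inl, Sum.elim_inr] at hzero
    · exact ⟨i, rfl, congrArg _ (Fin.ext (by omega))⟩
    all_goals omega
  · rintro ⟨j, rfl, rfl⟩
    simp [leftExponent, rightExponent]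

theorem sum_filter_dvd_leftExponent_add_rightExponent (hN : M + 2 * X ≤ N)
    (C : (Fin M ⊕ Fin X) × (Fin M ⊕ Fin X) → V) :
    ∑ k with (N : ℤ) ∣ leftExponent M X k.1 + rightExponent M X k.2, C k =
      ∑ j : Fin M, C (.inl j, .inl j) := by
  have diagonal_injective :
      Function.Injective fun j : Fin M => ((.inl j, .inl j) : (Fin M ⊕ Fin X) × (Fin M ⊕ Fin X)) :=
    fun _ _ h => Sum.inl_injective (Prod.ext_iff.1 h).1
  simp only [dvd_leftExponent_add_rightExponent_iff hN, sum_filter]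
  refine (Fintype.sum_of_injective _ diagonal_injective _ _ ?_ ?_).symm
  · rintro ⟨s, u⟩ hsu
    exact if_neg fun ⟨j, hs, hu⟩ => hsu ⟨j, Prod.ext hs.symm hu.symm⟩
  · exact fun j => (if_pos ⟨j, rfl, rfl⟩).symm

theorem sum_laurentEval_leftExponent_mul_rightExponent {t p r : Type*} [Fintype p] {ζ : K}
    (hζ : IsPrimitiveRoot ζ N) (hN : M + 2 * X ≤ N)
    (F : Fin M ⊕ Fin X → Matrix t p K) (G : Fin M ⊕ Fin X → Matrix p r K) :
    ∑ i : Fin N, laurentEval (leftExponent M X) F (ζ ^ ((i : ℕ) + 1)) *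
        laurentEval (rightExponent M X) G (ζ ^ ((i : ℕ) + 1)) =
      N • ∑ j : Fin M, F (.inl j) * G (.inl j) := by
  have hζ_ne (i : Fin N) : ζ ^ ((i : ℕ) + 1) ≠ 0 := pow_ne_zero _ (hζ.ne_zero i.pos.ne')
  simp only [laurentEval_mul_laurentEval _ _ _ _ (hζ_ne _)]
  rw [sum_laurentEval_of_isPrimitiveRoot hζ, sum_filter_dvd_leftExponent_add_rightExponent hN]

end Scheme

theorem one_div_smul_sum_map_re {ι m n : Type*} [Fintype ι] {N : ℕ} (hN : N ≠ 0)
    {H : ι → Matrix m n ℂ} {C : Matrix m n ℂ} (hH : ∑ i, H i = N • C) :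
    ((1 : ℝ) / N) • ∑ i, (H i).map Complex.re = C.map Complex.re := by
  let reMatrix : Matrix m n ℂ →ₗ[ℝ] Matrix m n ℝ := Complex.reLm.mapMatrix
  calc ((1 : ℝ) / N) • ∑ i, reMatrix (H i)
      = ((1 : ℝ) / N) • (N : ℝ) • reMatrix C := by
        rw [← map_sum, hH, map_nsmul, Nat.cast_smul_eq_nsmul]
    _ = reMatrix C := by
        rw [smul_smul, one_div_mul_cancel (Nat.cast_ne_zero.2 hN), one_smul]

theorem real_dft_scheme_decoding_general {M X N : ℕ} (hN₀ : N ≠ 0) (hN : M + 2 * X ≤ N)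
    {t p r : Type*} [Fintype p] {A' : Fin M → Matrix t p ℂ} {B' : Fin M → Matrix p r ℂ}
    {R' : Fin X → Matrix t p ℂ} {S' : Fin X → Matrix p r ℂ} {ζ : ℂ} (hζ : IsPrimitiveRoot ζ N)
    {f : ℂ → Matrix t p ℂ} {g : ℂ → Matrix p r ℂ}
    (hf : ∀ z : ℂ, z ≠ 0 →
      f z = ∑ j : Fin M, z ^ (j : ℕ) • A' j + ∑ j : Fin X, z ^ (M + (j : ℕ)) • R' j)
    (hg : ∀ z : ℂ, z ≠ 0 →
      g z = ∑ j : Fin M, z ^ (-((j : ℕ) : ℤ)) • B' j + ∑ j : Fin X, z ^ ((j : ℕ) + 1) • S' j) :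
    ((1 : ℝ) / N) • ∑ i : Fin N,
        (f (ζ ^ ((i : ℕ) + 1)) * g (ζ ^ ((i : ℕ) + 1))).map Complex.re =
      (∑ j : Fin M, A' j * B' j).map Complex.re := by
  have hζ_ne (i : Fin N) : ζ ^ ((i : ℕ) + 1) ≠ 0 := pow_ne_zero _ (hζ.ne_zero hN₀)
  apply one_div_smul_sum_map_re hN₀
  simp only [hf _ (hζ_ne _), hg _ (hζ_ne _), ← laurentEval_leftExponent,
    ← laurentEval_rightExponent]
  exact sum_laurentEval_leftExponent_mul_rightExponent hζ hN _ _

/-- Decoding correctness of the real DFT SDMM scheme: with `N = M + 2X` and `α i = ω_N^i`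
ranging over all `N`-th roots of unity,
`(1/N) Σ_i Re(f(α i) g(α i)) = Re(Σ_j A' j * B' j)` (entrywise real parts). -/
theorem real_dft_scheme_decoding (M X : ℕ) (hM : 1 ≤ M) (hX : 1 ≤ X)
    (N : ℕ) (hN : N = M + 2 * X) (t p r : ℕ)
    (A' : Fin M → Matrix (Fin t) (Fin p) ℂ) (B' : Fin M → Matrix (Fin p) (Fin r) ℂ)
    (R' : Fin X → Matrix (Fin t) (Fin p) ℂ) (S' : Fin X → Matrix (Fin p) (Fin r) ℂ)
    (α : Fin N → ℂ)
    (hα : ∀ i : Fin N, α i = Complex.exp (2 * Real.pi * Complex.I / N) ^ ((i : ℕ) + 1))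
    (f : ℂ → Matrix (Fin t) (Fin p) ℂ) (g : ℂ → Matrix (Fin p) (Fin r) ℂ)
    (hf : ∀ z : ℂ, z ≠ 0 →
      f z = ∑ j : Fin M, z ^ (j : ℕ) • A' j + ∑ j : Fin X, z ^ (M + (j : ℕ)) • R' j)
    (hg : ∀ z : ℂ, z ≠ 0 →
      g z = ∑ j : Fin M, z ^ (-((j : ℕ) : ℤ)) • B' j + ∑ j : Fin X, z ^ ((j : ℕ) + 1) • S' j) :
    ((1 : ℝ) / N) • ∑ i : Fin N, (f (α i) * g (α i)).map Complex.re =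
      (∑ j : Fin M, A' j * B' j).map Complex.re := by
  have hN₀ : N ≠ 0 := by omega
  simpa only [hα] using
    real_dft_scheme_decoding_general hN₀ hN.ge (Complex.isPrimitiveRoot_exp N hN₀) hf hg
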